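/- arXiv:1710.01223 — 3 statements merged into one kernel-verified Lean document; each statement's English description precedes it below -/
import Mathlib

section
/- Let I : ℝ^n → ℝ, let ∇̄I : ℝ^n × ℝ^n → ℝ^n be a discrete gradient of I, i.e. a map satisfying (∇̄I(v,u))ᵀ(u − v) = I(u) − I(v) for all u, v ∈ ℝ^n, let S̄ ∈ Mat_{n×n}(ℝ) be skew-symmetric, and let Δt ∈ ℝ. If vectors u⁰, u¹ ∈ ℝ^n satisfy the discrete gradient scheme (u¹ − u⁰)/Δt = S̄ ∇̄I(u⁰, u¹), then I(u¹) = I(u⁰); i.e., the discrete gradient method exactly preserves the first integral I. -/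
open Matrix

section SkewSymmetric

variable {ι R : Type*} [Fintype ι] [CommRing R] {S : Matrix ι ι R}

theorem dotProduct_mulVec_anticomm_of_transpose_eq_neg (hS : Sᵀ = -S) (x y : ι → R) :
    x ⬝ᵥ (S *ᵥ y) = -(y ⬝ᵥ (S *ᵥ x)) := by
  rw [← dotProduct_transpose_mulVec, hS, neg_mulVec, dotProduct_neg]

variable [NoZeroDivisors R] [NeZero (2 : R)]

theorem dotProduct_mulVec_self_eq_zero_of_transpose_eq_neg (hS : Sᵀ = -S) (x : ι → R) :
    x ⬝ᵥ (S *ᵥ x) = 0 := by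
  have twice_eq_zero : 2 * (x ⬝ᵥ (S *ᵥ x)) = 0 := by
    rw [two_mul, add_eq_zero_iff_eq_neg]
    exact dotProduct_mulVec_anticomm_of_transpose_eq_neg hS x x
  exact (mul_eq_zero.mp twice_eq_zero).resolve_left two_ne_zero

theorem dotProduct_eq_zero_of_smul_eq_mulVec (hS : Sᵀ = -S) {c : R} (hc : c ≠ 0)
    {g w : ι → R} (hw : c • w = S *ᵥ g) : g ⬝ᵥ w = 0 := by
  have scaled_eq_zero : c * (g ⬝ᵥ w) = 0 := by
    rw [← smul_eq_mul, ← dotProduct_smul, hw,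
      dotProduct_mulVec_self_eq_zero_of_transpose_eq_neg hS]
  exact (mul_eq_zero.mp scaled_eq_zero).resolve_left hc

end SkewSymmetric

theorem discrete_gradient_method_preserves_integral_general {ι K : Type*} [Fintype ι] [Field K]
    [NeZero (2 : K)] (I : (ι → K) → K) (DG : (ι → K) → (ι → K) → (ι → K))
    (hDG : ∀ v u : ι → K, DG v u ⬝ᵥ (u - v) = I u - I v)
    (S : Matrix ι ι K) (hS : Sᵀ = -S) (Δt : K) (hΔt : Δt ≠ 0) (u0 u1 : ι → K)
    (hscheme : Δt⁻¹ • (u1 - u0) = S *ᵥ DG u0 u1) :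
    I u1 = I u0 := by
  have step_orthogonal : DG u0 u1 ⬝ᵥ (u1 - u0) = 0 :=
    dotProduct_eq_zero_of_smul_eq_mulVec hS (inv_ne_zero hΔt) hscheme
  exact sub_eq_zero.mp ((hDG u0 u1).symm.trans step_orthogonal)

/-- A discrete gradient method `(u¹ - u⁰)/Δt = S̄ ∇̄I(u⁰, u¹)` with `S̄` skew-symmetric
and `∇̄I` a discrete gradient of `I` exactly preserves the first integral `I`. -/
theorem discrete_gradient_method_preserves_integral {n : ℕ}
    (I : (Fin n → ℝ) → ℝ)
    (DG : (Fin n → ℝ) → (Fin n → ℝ) → (Fin n → ℝ))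
    (hDG : ∀ v u : Fin n → ℝ, DG v u ⬝ᵥ (u - v) = I u - I v)
    (S : Matrix (Fin n) (Fin n) ℝ) (hS : Sᵀ = -S)
    (Δt : ℝ) (hΔt : Δt ≠ 0)
    (u0 u1 : Fin n → ℝ)
    (hscheme : Δt⁻¹ • (u1 - u0) = S *ᵥ DG u0 u1) :
    I u1 = I u0 :=
  discrete_gradient_method_preserves_integral_general I DG hDG S hS Δt hΔt u0 u1 hscheme
end

section
/- Let L > 0 and let u : ℝ × ℝ → ℝ (written u(x,t)) be C³, 2L-periodic in x (u(x+2L, t) = u(x,t) for all x,t, together with all its spatial derivatives), and satisfy the Benjamin–Bona–Mahony equation u_t − u_{xxt} + u_x + u u_x = 0 for all (x,t). Then the Hamiltonian H¹(t) = ½ ∫_{−L}^{L} ( u(x,t)² + u_x(x,t)² ) dx is constant in t. -/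
open MeasureTheory intervalIntegral

/-!
Multiplying the equation by `2 u` and writing
`2 u u_{xxt} = ∂ₓ (2 u u_{xt}) - ∂ₜ (u_x²)`, where `u_{xxt} = u_{xtx}` by symmetry of the second
derivatives of `u_x`, gives the local conservation law
`∂ₓ (u² + (2/3) u³ - 2 u u_{xt}) + ∂ₜ (u² + u_x²) = 0`.
By the divergence theorem on `[-L, L] × [s, t]`, the integral of the density changes only by the
flux through the lines `x = ±L`, and the two contributions cancel by periodicity.
-/

section PartialDerivatives

variable {𝕜 F : Type*} [NontriviallyNormedField 𝕜] [NormedAddCommGroup F] [NormedSpace 𝕜 F]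

/-- The partial derivative of a function of two variables in its first variable, `∂ₓ` for functions
of `(x, t)`. -/
noncomputable def partialFst {α : Type*} (f : 𝕜 × α → F) (p : 𝕜 × α) : F :=
  deriv (fun x => f (x, p.2)) p.1

/-- The partial derivative of a function of two variables in its second variable, `∂ₜ` for functions
of `(x, t)`. -/
noncomputable def partialSnd {α : Type*} (f : α × 𝕜 → F) (p : α × 𝕜) : F :=
  deriv (fun t => f (p.1, t)) p.2

lemma partialFst_periodic {α : Type*} [Add α] {f : 𝕜 × α → F} {c : 𝕜 × α}
    (hf : Function.Periodic f c) : Function.Periodic (partialFst f) c := fun p =>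
  calc
    partialFst f (p + c) = deriv (fun x => f (x + c.1, p.2 + c.2)) p.1 :=
      (deriv_comp_add_const (fun x => f (x, p.2 + c.2)) c.1 p.1).symm
    _ = partialFst f p := congrArg (deriv · p.1) (funext fun x => hf (x, p.2))

lemma partialSnd_periodic {α : Type*} [Add α] {f : α × 𝕜 → F} {c : α × 𝕜}
    (hf : Function.Periodic f c) : Function.Periodic (partialSnd f) c := fun p =>
  calc
    partialSnd f (p + c) = deriv (fun t => f (p.1 + c.1, t + c.2)) p.2 :=
      (deriv_comp_add_const (fun t => f (p.1 + c.1, t)) c.2 p.2).symm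
    _ = partialSnd f p := congrArg (deriv · p.2) (funext fun t => hf (p.1, t))

variable {E : Type*} [NormedAddCommGroup E] [NormedSpace 𝕜 E]

lemma hasDerivAt_partialFst {f : 𝕜 × E → F} {p : 𝕜 × E} (hf : DifferentiableAt 𝕜 f p) :
    HasDerivAt (fun x => f (x, p.2)) (partialFst f p) p.1 :=
  (hf.comp p.1 (by fun_prop : DifferentiableAt 𝕜 (fun x => (x, p.2)) p.1)).hasDerivAt

lemma hasDerivAt_partialSnd {f : E × 𝕜 → F} {p : E × 𝕜} (hf : DifferentiableAt 𝕜 f p) :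
    HasDerivAt (fun t => f (p.1, t)) (partialSnd f p) p.2 :=
  (hf.comp p.2 (by fun_prop : DifferentiableAt 𝕜 (fun t => (p.1, t)) p.2)).hasDerivAt

lemma partialFst_eq_fderiv {f : 𝕜 × E → F} (hf : Differentiable 𝕜 f) :
    partialFst f = fun p => fderiv 𝕜 f p (1, 0) :=
  funext fun p => ((hf p).hasFDerivAt.comp_hasDerivAt p.1
    ((hasDerivAt_id p.1).prodMk (hasDerivAt_const p.1 p.2))).deriv

lemma partialSnd_eq_fderiv {f : E × 𝕜 → F} (hf : Differentiable 𝕜 f) :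
    partialSnd f = fun p => fderiv 𝕜 f p (0, 1) :=
  funext fun p => ((hf p).hasFDerivAt.comp_hasDerivAt p.2
    ((hasDerivAt_const p.2 p.1).prodMk (hasDerivAt_id p.2))).deriv

lemma contDiff_partialFst {f : 𝕜 × E → F} {m n : WithTop ℕ∞} (hf : ContDiff 𝕜 n f)
    (hmn : m + 1 ≤ n) : ContDiff 𝕜 m (partialFst f) := by
  have hd : Differentiable 𝕜 f := (hf.of_le (le_add_self.trans hmn)).differentiable one_ne_zero
  rw [partialFst_eq_fderiv hd]
  exact (hf.fderiv_right hmn).clm_apply contDiff_const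

lemma contDiff_partialSnd {f : E × 𝕜 → F} {m n : WithTop ℕ∞} (hf : ContDiff 𝕜 n f)
    (hmn : m + 1 ≤ n) : ContDiff 𝕜 m (partialSnd f) := by
  have hd : Differentiable 𝕜 f := (hf.of_le (le_add_self.trans hmn)).differentiable one_ne_zero
  rw [partialSnd_eq_fderiv hd]
  exact (hf.fderiv_right hmn).clm_apply contDiff_const

end PartialDerivatives

lemma partialFst_partialSnd_comm {𝕜 F : Type*} [RCLike 𝕜] [NormedAddCommGroup F]
    [NormedSpace 𝕜 F] {f : 𝕜 × 𝕜 → F} (hf : ContDiff 𝕜 2 f) :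
    partialFst (partialSnd f) = partialSnd (partialFst f) := by
  have hd : Differentiable 𝕜 f := hf.differentiable two_ne_zero
  have hd' : Differentiable 𝕜 (fderiv 𝕜 f) :=
    (hf.fderiv_right (m := 1) (by norm_num)).differentiable one_ne_zero
  have hfst : Differentiable 𝕜 (partialFst f) :=
    (contDiff_partialFst hf (m := 1) (by norm_num)).differentiable one_ne_zero
  have hsnd : Differentiable 𝕜 (partialSnd f) :=
    (contDiff_partialSnd hf (m := 1) (by norm_num)).differentiable one_ne_zero
  have hsecond (p v w : 𝕜 × 𝕜) :
      fderiv 𝕜 (fun q => fderiv 𝕜 f q w) p v = fderiv 𝕜 (fderiv 𝕜 f) p v w := by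
    rw [fderiv_clm_apply (hd' p) (differentiableAt_const w)]
    simp
  rw [partialFst_eq_fderiv hsnd, partialSnd_eq_fderiv hfst, partialFst_eq_fderiv hd,
    partialSnd_eq_fderiv hd]
  funext p
  rw [hsecond, hsecond]
  exact (hf.contDiffAt.isSymmSndFDerivAt (by simp)).eq _ _

lemma integral_sub_integral_of_conservation_law {E : Type*} [NormedAddCommGroup E]
    [NormedSpace ℝ E] {ρ φ : ℝ × ℝ → E} (hρ : Differentiable ℝ ρ) (hφ : Differentiable ℝ φ)
    (hlaw : ∀ p, partialFst φ p + partialSnd ρ p = 0) (a b s t : ℝ) :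
    (∫ x in a..b, ρ (x, t)) - ∫ x in a..b, ρ (x, s)
      = (∫ τ in s..t, φ (a, τ)) - ∫ τ in s..t, φ (b, τ) := by
  have hdiv (p : ℝ × ℝ) : fderiv ℝ φ p (1, 0) + fderiv ℝ ρ p (0, 1) = 0 := by
    simpa only [partialFst_eq_fderiv hφ, partialSnd_eq_fderiv hρ] using hlaw p
  have hgreen := integral2_divergence_prod_of_hasFDerivAt φ ρ (fderiv ℝ φ) (fderiv ℝ ρ) a s b t
    hφ.continuous.continuousOn hρ.continuous.continuousOn
    (fun p _ => (hφ p).hasFDerivAt) (fun p _ => (hρ p).hasFDerivAt)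
    (by simp only [hdiv, integrableOn_zero])
  simp only [hdiv, intervalIntegral.integral_zero] at hgreen
  rw [← sub_eq_zero, hgreen]
  abel

section BBM

/-- `u`, as a function of `(x, t)`, satisfies the Benjamin–Bona–Mahony equation
`u_t - u_{xxt} + u_x + u u_x = 0` pointwise. Differentiability is not part of the definition: a
derivative that does not exist counts as `0`. -/
def IsBBMSolution (u : ℝ × ℝ → ℝ) : Prop :=
  ∀ p, partialSnd u p - partialSnd (partialFst (partialFst u)) p + partialFst u p
    + u p * partialFst u p = 0

/-- The density `u² + u_x²` of the Hamiltonian `H¹`, without the factor `1/2`. -/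
noncomputable def energyDensity (u : ℝ × ℝ → ℝ) (p : ℝ × ℝ) : ℝ :=
  u p ^ 2 + partialFst u p ^ 2

/-- The flux `u² + (2/3) u³ - 2 u u_{xt}` that balances `energyDensity` along BBM solutions. -/
noncomputable def energyFlux (u : ℝ × ℝ → ℝ) (p : ℝ × ℝ) : ℝ :=
  u p ^ 2 + 2 / 3 * u p ^ 3 - 2 * (u p * partialSnd (partialFst u) p)

variable {u : ℝ × ℝ → ℝ}

lemma differentiable_energyDensity (hu : ContDiff ℝ 2 u) : Differentiable ℝ (energyDensity u) := by
  have hd : Differentiable ℝ u := hu.differentiable two_ne_zero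
  have hdx : Differentiable ℝ (partialFst u) :=
    (contDiff_partialFst hu (m := 1) (by norm_num)).differentiable one_ne_zero
  unfold energyDensity
  fun_prop

lemma differentiable_energyFlux (hu : ContDiff ℝ 3 u) : Differentiable ℝ (energyFlux u) := by
  have hd : Differentiable ℝ u := hu.differentiable three_ne_zero
  have hx : ContDiff ℝ 2 (partialFst u) := contDiff_partialFst hu (by norm_num)
  have hdxt : Differentiable ℝ (partialSnd (partialFst u)) :=
    (contDiff_partialSnd hx (m := 1) (by norm_num)).differentiable one_ne_zero
  unfold energyFlux
  fun_prop

lemma energyFlux_periodic {c : ℝ × ℝ} (hu : Function.Periodic u c) :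
    Function.Periodic (energyFlux u) c := fun p => by
  simp only [energyFlux, hu p, partialSnd_periodic (partialFst_periodic hu) p]

lemma partialSnd_energyDensity {p : ℝ × ℝ} (hu : DifferentiableAt ℝ u p)
    (hux : DifferentiableAt ℝ (partialFst u) p) :
    partialSnd (energyDensity u) p
      = 2 * (u p * partialSnd u p + partialFst u p * partialSnd (partialFst u) p) := by
  refine (((hasDerivAt_partialSnd hu).pow 2).add
    ((hasDerivAt_partialSnd hux).pow 2)).deriv.trans ?_
  push_cast
  ring

lemma partialFst_energyFlux {p : ℝ × ℝ} (hu : DifferentiableAt ℝ u p)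
    (huxt : DifferentiableAt ℝ (partialSnd (partialFst u)) p) :
    partialFst (energyFlux u) p
      = 2 * ((u p + u p ^ 2) * partialFst u p - partialFst u p * partialSnd (partialFst u) p
        - u p * partialFst (partialSnd (partialFst u)) p) := by
  have hx := hasDerivAt_partialFst hu
  refine (((hx.pow 2).add ((hx.pow 3).const_mul (2 / 3))).sub
    ((hx.mul (hasDerivAt_partialFst huxt)).const_mul 2)).deriv.trans ?_
  push_cast
  ring

namespace IsBBMSolution

lemma energy_conservation_law (h : IsBBMSolution u) (hu : ContDiff ℝ 3 u) (p : ℝ × ℝ) :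
    partialFst (energyFlux u) p + partialSnd (energyDensity u) p = 0 := by
  have hx : ContDiff ℝ 2 (partialFst u) := contDiff_partialFst hu (by norm_num)
  have hxt : ContDiff ℝ 1 (partialSnd (partialFst u)) := contDiff_partialSnd hx (by norm_num)
  have hd : DifferentiableAt ℝ u p := hu.differentiable three_ne_zero p
  rw [partialFst_energyFlux hd (hxt.differentiable one_ne_zero p),
    partialSnd_energyDensity hd (hx.differentiable two_ne_zero p), partialFst_partialSnd_comm hx]
  linear_combination 2 * u p * h p

lemma integral_energyDensity_eq (h : IsBBMSolution u) (hu : ContDiff ℝ 3 u) {T : ℝ}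
    (hper : Function.Periodic u (T, 0)) (a s t : ℝ) :
    ∫ x in a..a + T, energyDensity u (x, s) = ∫ x in a..a + T, energyDensity u (x, t) := by
  have hends (τ : ℝ) : energyFlux u (a + T, τ) = energyFlux u (a, τ) := by
    simpa using energyFlux_periodic hper (a, τ)
  rw [← sub_eq_zero, integral_sub_integral_of_conservation_law
    (differentiable_energyDensity (hu.of_le (by norm_num))) (differentiable_energyFlux hu)
    (h.energy_conservation_law hu)]
  simp only [hends, sub_self]

end IsBBMSolution

end BBM

/-- For a C³, `2L`-periodic (in `x`) solution `u` of the BBM equation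
`u_t - u_{xxt} + u_x + u u_x = 0`, the Hamiltonian
`H¹(t) = ½ ∫_{-L}^{L} (u² + u_x²) dx` is constant in `t`. -/
theorem bbm_preserves_H1 (L : ℝ) (hL : 0 < L) (u : ℝ → ℝ → ℝ)
    (hu : ContDiff ℝ 3 (fun p : ℝ × ℝ => u p.1 p.2))
    (hper : ∀ x t : ℝ, u (x + 2 * L) t = u x t)
    (hbbm : ∀ x t : ℝ,
      deriv (fun s => u x s) t
      - deriv (fun s => deriv (fun y => deriv (fun y' => u y' s) y) x) t
      + deriv (fun y => u y t) x
      + u x t * deriv (fun y => u y t) x = 0) :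
    ∀ s t : ℝ,
      (1/2) * ∫ x in (-L)..L, ((u x s)^2 + (deriv (fun y => u y s) x)^2)
        = (1/2) * ∫ x in (-L)..L, ((u x t)^2 + (deriv (fun y => u y t) x)^2) := by
  intro s t
  have hsol : IsBBMSolution fun p => u p.1 p.2 := fun p => hbbm p.1 p.2
  have hperiodic : Function.Periodic (fun p : ℝ × ℝ => u p.1 p.2) (2 * L, 0) := fun p => by
    simp only [Prod.fst_add, Prod.snd_add, add_zero, hper]
  have hend : -L + 2 * L = L := by ring
  have hconst := hsol.integral_energyDensity_eq hu hperiodic (-L) s t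
  rw [hend] at hconst
  exact congrArg (1 / 2 * ·) hconst
end

section
/- Let L > 0 and let u : ℝ × ℝ → ℝ (written u(x,t)) be C³, 2L-periodic in x (u(x+2L, t) = u(x,t) for all x,t, together with all its spatial derivatives), and satisfy the Benjamin–Bona–Mahony equation u_t − u_{xxt} + u_x + u u_x = 0 for all (x,t). Then the Hamiltonian H²(t) = ½ ∫_{−L}^{L} ( u(x,t)² + (1/3) u(x,t)³ ) dx is constant in t. -/
open MeasureTheory intervalIntegral

/-!
Write the equation as `u_t - u_xxt + ∂_x h(u) = 0`, where `h(r) = r + r²/2` is the derivative of the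
density `H(r) = ½ (r² + r³/3)`, and put `v = u_t` and `G = h(u) - v_x`. Since `u_xxt = v_xx`, the
equation says `G_x = -v`, and hence
`∂_t H(u) = h(u) v = (G + v_x) v = ∂_x ½ (v² - G²)`.
The density thus obeys a local conservation law whose flux is periodic in `x`. Nothing in this
depends on the choice of `h`.
-/

open Function (Periodic uncurry)

open scoped Interval

section PartialDerivatives

variable {𝕜 E : Type*} [NormedAddCommGroup E]

section NontriviallyNormedField

variable [NontriviallyNormedField 𝕜] [NormedSpace 𝕜 E]

/-- The partial derivative of a curried function of two scalar variables with respect to the first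
one; this is `∂_x` for `u x t`. -/
noncomputable def derivFst (u : 𝕜 → 𝕜 → E) (x t : 𝕜) : E := deriv (fun y => u y t) x

/-- The partial derivative of a curried function of two scalar variables with respect to the second
one; this is `∂_t` for `u x t`. -/
noncomputable def derivSnd (u : 𝕜 → 𝕜 → E) (x t : 𝕜) : E := deriv (u x) t

variable {u : 𝕜 → 𝕜 → E} {m n : WithTop ℕ∞}

lemma contDiff_derivFst (hu : ContDiff 𝕜 n (uncurry u)) (hmn : m + 1 ≤ n) :
    ContDiff 𝕜 m (uncurry (derivFst u)) :=
  ContDiff.fderiv_apply (f := fun (p : 𝕜 × 𝕜) y => u y p.2)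
    (hu.comp (contDiff_snd.prodMk (contDiff_snd.comp contDiff_fst))) contDiff_fst
    (contDiff_const (c := (1 : 𝕜))) hmn

lemma contDiff_derivSnd (hu : ContDiff 𝕜 n (uncurry u)) (hmn : m + 1 ≤ n) :
    ContDiff 𝕜 m (uncurry (derivSnd u)) :=
  ContDiff.fderiv_apply (f := fun (p : 𝕜 × 𝕜) s => u p.1 s)
    (hu.comp ((contDiff_fst.comp contDiff_fst).prodMk contDiff_snd)) contDiff_snd
    (contDiff_const (c := (1 : 𝕜))) hmn

lemma hasDerivAt_derivFst (hu : Differentiable 𝕜 (uncurry u)) (x t : 𝕜) :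
    HasDerivAt (fun y => u y t) (derivFst u x t) x :=
  (hu.comp (differentiable_id.prodMk (differentiable_const t)) x).hasDerivAt

lemma hasDerivAt_derivSnd (hu : Differentiable 𝕜 (uncurry u)) (x t : 𝕜) :
    HasDerivAt (u x) (derivSnd u x t) t :=
  (hu.comp ((differentiable_const x).prodMk differentiable_id) t).hasDerivAt

lemma derivFst_eq_fderiv (hu : Differentiable 𝕜 (uncurry u)) (x t : 𝕜) :
    derivFst u x t = fderiv 𝕜 (uncurry u) (x, t) (1, 0) :=
  (hasDerivAt_derivFst hu x t).unique ((hu (x, t)).hasFDerivAt.comp_hasDerivAt (l := uncurry u) x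
    ((hasDerivAt_id x).prodMk (hasDerivAt_const x t)))

lemma derivSnd_eq_fderiv (hu : Differentiable 𝕜 (uncurry u)) (x t : 𝕜) :
    derivSnd u x t = fderiv 𝕜 (uncurry u) (x, t) (0, 1) :=
  (hasDerivAt_derivSnd hu x t).unique ((hu (x, t)).hasFDerivAt.comp_hasDerivAt t
    ((hasDerivAt_const t x).prodMk (hasDerivAt_id t)))

lemma periodic_derivFst {T : 𝕜} (hu : Periodic u T) : Periodic (derivFst u) T := fun x => by
  funext t
  unfold derivFst
  rw [← deriv_comp_add_const]
  simp only [hu _]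

lemma periodic_derivSnd {T : 𝕜} (hu : Periodic u T) : Periodic (derivSnd u) T :=
  hu.comp deriv

end NontriviallyNormedField

lemma derivFst_derivSnd_comm [RCLike 𝕜] [NormedSpace 𝕜 E] {u : 𝕜 → 𝕜 → E}
    (hu : ContDiff 𝕜 2 (uncurry u)) : derivFst (derivSnd u) = derivSnd (derivFst u) := by
  have hu_diff : Differentiable 𝕜 (uncurry u) := hu.differentiable two_ne_zero
  have hfderiv : Differentiable 𝕜 (fderiv 𝕜 (uncurry u)) :=
    (hu.fderiv_right one_add_one_eq_two.le).differentiable one_ne_zero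
  have fderiv_fderiv_apply (p v w : 𝕜 × 𝕜) :
      fderiv 𝕜 (fun q => fderiv 𝕜 (uncurry u) q w) p v
        = fderiv 𝕜 (fderiv 𝕜 (uncurry u)) p v w := by
    simp [fderiv_clm_apply (hfderiv p) (differentiableAt_const w)]
  have hfst : uncurry (derivFst u) = fun q => fderiv 𝕜 (uncurry u) q (1, 0) :=
    funext fun q => derivFst_eq_fderiv hu_diff q.1 q.2
  have hsnd : uncurry (derivSnd u) = fun q => fderiv 𝕜 (uncurry u) q (0, 1) :=
    funext fun q => derivSnd_eq_fderiv hu_diff q.1 q.2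
  have hfst_diff : Differentiable 𝕜 (uncurry (derivFst u)) :=
    (contDiff_derivFst hu one_add_one_eq_two.le).differentiable one_ne_zero
  have hsnd_diff : Differentiable 𝕜 (uncurry (derivSnd u)) :=
    (contDiff_derivSnd hu one_add_one_eq_two.le).differentiable one_ne_zero
  funext x t
  rw [derivFst_eq_fderiv hsnd_diff, derivSnd_eq_fderiv hfst_diff, hfst, hsnd,
    fderiv_fderiv_apply, fderiv_fderiv_apply]
  exact (hu.contDiffAt.isSymmSndFDerivAt (by simp)).eq (1, 0) (0, 1)

end PartialDerivatives

lemma hasDerivAt_integral_of_continuous {𝕜 E : Type*} [RCLike 𝕜] [NormedAddCommGroup E]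
    [NormedSpace ℝ E] [NormedSpace 𝕜 E] {μ : Measure ℝ} [IsLocallyFiniteMeasure μ]
    {f f' : 𝕜 → ℝ → E} (hf : ∀ s, Continuous (f s)) (hf' : Continuous (uncurry f'))
    (hderiv : ∀ s x, HasDerivAt (fun r => f r x) (f' s x) s) (a b : ℝ) (t : 𝕜) :
    HasDerivAt (fun s => ∫ x in a..b, f s x ∂μ) (∫ x in a..b, f' t x ∂μ) t := by
  obtain ⟨C, hC⟩ := ((isCompact_closedBall t 1).prod
    (isCompact_uIcc (a := a) (b := b))).exists_bound_of_continuousOn hf'.continuousOn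
  refine (hasDerivAt_integral_of_dominated_loc_of_deriv_le (bound := fun _ => C)
    (Metric.closedBall_mem_nhds t one_pos) ?_ ((hf t).intervalIntegrable a b) ?_ ?_
    intervalIntegrable_const ?_).2
  · exact .of_forall fun s => (hf s).aestronglyMeasurable
  · exact (hf'.uncurry_left t).aestronglyMeasurable
  · exact .of_forall fun x hx s hs => hC (s, x) ⟨hs, Set.uIoc_subset_uIcc hx⟩
  · exact .of_forall fun x _ s _ => hderiv s x

lemma integral_mul_eq_zero_of_hasDerivAt_sub_of_hasDerivAt_neg {q v G : ℝ → ℝ} {a b : ℝ}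
    (hq : IntervalIntegrable q volume a b)
    (hv : ∀ x ∈ [[a, b]], HasDerivAt v (q x - G x) x)
    (hG : ∀ x ∈ [[a, b]], HasDerivAt G (-v x) x) (hv_ends : v a = v b) (hG_ends : G a = G b) :
    ∫ x in a..b, q x * v x = 0 := by
  have hflux : ∀ x ∈ [[a, b]], HasDerivAt (fun y => (v y ^ 2 - G y ^ 2) / 2) (q x * v x) x :=
    fun x hx => ((((hv x hx).pow 2).sub ((hG x hx).pow 2)).div_const 2).congr_deriv (by
      push_cast
      ring)
  have hv_cont : ContinuousOn v [[a, b]] := fun x hx => (hv x hx).continuousAt.continuousWithinAt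
  rw [integral_eq_sub_of_hasDerivAt hflux (hq.mul_continuousOn hv_cont), hv_ends, hG_ends, sub_self]

section GeneralizedBBM

variable {H h c : ℝ → ℝ} {u : ℝ → ℝ → ℝ} {T : ℝ}

lemma integral_flux_mul_derivSnd_eq_zero (hh : ∀ r, HasDerivAt h (c r) r)
    (hu : ContDiff ℝ 3 (uncurry u)) (hper : Periodic u T)
    (hbbm : ∀ x t, derivSnd u x t - derivSnd (derivFst (derivFst u)) x t
      + c (u x t) * derivFst u x t = 0) (a t : ℝ) :
    ∫ x in a..a + T, h (u x t) * derivSnd u x t = 0 := by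
  have hu_diff : Differentiable ℝ (uncurry u) := hu.differentiable three_ne_zero
  have hv : ContDiff ℝ 2 (uncurry (derivSnd u)) := contDiff_derivSnd hu (by norm_num)
  have hvx : ContDiff ℝ 1 (uncurry (derivFst (derivSnd u))) := contDiff_derivFst hv (by norm_num)
  have hmixed : derivFst (derivFst (derivSnd u)) = derivSnd (derivFst (derivFst u)) := by
    rw [derivFst_derivSnd_comm (hu.of_le (by norm_num)),
      derivFst_derivSnd_comm (contDiff_derivFst hu (by norm_num))]
  have hflux_deriv (x : ℝ) : HasDerivAt (fun y => h (u y t)) (c (u x t) * derivFst u x t) x :=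
    (hh (u x t)).comp x (hasDerivAt_derivFst hu_diff x t)
  have hflux_cont : Continuous fun x => h (u x t) :=
    continuous_iff_continuousAt.2 fun x => (hflux_deriv x).continuousAt
  have hv_per := periodic_derivSnd hper
  refine integral_mul_eq_zero_of_hasDerivAt_sub_of_hasDerivAt_neg
    (G := fun x => h (u x t) - derivFst (derivSnd u) x t) (hflux_cont.intervalIntegrable _ _)
    (fun x _ => ?_) (fun x _ => ?_) (by rw [hv_per a])
    (by simp only [hper a, periodic_derivFst hv_per a])
  · simpa only [sub_sub_cancel] using hasDerivAt_derivFst (hv.differentiable two_ne_zero) x t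
  · refine ((hflux_deriv x).sub
      (hasDerivAt_derivFst (hvx.differentiable one_ne_zero) x t)).congr_deriv ?_
    rw [hmixed]
    linear_combination hbbm x t

theorem bbm_preserves_H2_general (hH : ∀ r, HasDerivAt H (h r) r)
    (hh : ∀ r, HasDerivAt h (c r) r) (hu : ContDiff ℝ 3 (uncurry u)) (hper : Periodic u T)
    (hbbm : ∀ x t, derivSnd u x t - derivSnd (derivFst (derivFst u)) x t
      + c (u x t) * derivFst u x t = 0) (a s t : ℝ) :
    ∫ x in a..a + T, H (u x s) = ∫ x in a..a + T, H (u x t) := by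
  have hH_cont : Continuous H := continuous_iff_continuousAt.2 fun r => (hH r).continuousAt
  have hh_cont : Continuous h := continuous_iff_continuousAt.2 fun r => (hh r).continuousAt
  have hu_cont : Continuous (uncurry u) := hu.continuous
  have hv_cont : Continuous (uncurry (derivSnd u)) :=
    (contDiff_derivSnd (m := 0) hu (by norm_num)).continuous
  have hdensity (r x : ℝ) :
      HasDerivAt (fun s => H (u x s)) (h (u x r) * derivSnd u x r) r :=
    (hH (u x r)).comp r (hasDerivAt_derivSnd (hu.differentiable three_ne_zero) x r)
  have hintegral (r : ℝ) : HasDerivAt (fun s => ∫ x in a..a + T, H (u x s)) 0 r :=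
    (hasDerivAt_integral_of_continuous (f' := fun s x => h (u x s) * derivSnd u x s)
      (fun s => hH_cont.comp (hu_cont.uncurry_right s))
      (((hh_cont.comp hu_cont).mul hv_cont).comp continuous_swap) hdensity a (a + T) r).congr_deriv
      (integral_flux_mul_derivSnd_eq_zero hh hu hper hbbm a r)
  exact is_const_of_deriv_eq_zero (fun r => (hintegral r).differentiableAt)
    (fun r => (hintegral r).deriv) s t

end GeneralizedBBM

lemma hasDerivAt_H2_density (r : ℝ) :
    HasDerivAt (fun r : ℝ => (1 / 2) * (r ^ 2 + (1 / 3) * r ^ 3)) (r + r ^ 2 / 2) r :=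
  (((hasDerivAt_pow 2 r).add ((hasDerivAt_pow 3 r).const_mul (1 / 3))).const_mul
    (1 / 2)).congr_deriv (by
      push_cast
      ring)

lemma hasDerivAt_id_add_sq_div_two (r : ℝ) :
    HasDerivAt (fun r : ℝ => r + r ^ 2 / 2) (1 + r) r :=
  ((hasDerivAt_id r).add ((hasDerivAt_pow 2 r).div_const 2)).congr_deriv (by
    push_cast
    ring)

/-- For a C³, `2L`-periodic (in `x`) solution `u` of the BBM equation
`u_t - u_{xxt} + u_x + u u_x = 0`, the Hamiltonian
`H²(t) = ½ ∫_{-L}^{L} (u² + (1/3) u³) dx` is constant in `t`. -/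
theorem bbm_preserves_H2 (L : ℝ) (hL : 0 < L) (u : ℝ → ℝ → ℝ)
    (hu : ContDiff ℝ 3 (fun p : ℝ × ℝ => u p.1 p.2))
    (hper : ∀ x t : ℝ, u (x + 2 * L) t = u x t)
    (hbbm : ∀ x t : ℝ,
      deriv (fun s => u x s) t
      - deriv (fun s => deriv (fun y => deriv (fun y' => u y' s) y) x) t
      + deriv (fun y => u y t) x
      + u x t * deriv (fun y => u y t) x = 0) :
    ∀ s t : ℝ,
      (1/2) * ∫ x in (-L)..L, ((u x s)^2 + (1/3) * (u x s)^3)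
        = (1/2) * ∫ x in (-L)..L, ((u x t)^2 + (1/3) * (u x t)^3) := by
  intro s t
  have hconst := bbm_preserves_H2_general hasDerivAt_H2_density hasDerivAt_id_add_sq_div_two hu
    (fun x => funext (hper x))
    (fun x t => by rw [one_add_mul, ← add_assoc]; exact hbbm x t) (-L) s t
  rwa [show -L + 2 * L = L by ring, intervalIntegral.integral_const_mul,
    intervalIntegral.integral_const_mul] at hconst
end
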